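/- arXiv:2601.08554 — 6 statements merged into one kernel-verified Lean document; each statement's English description precedes it below -/
import Mathlib

section
/- Lemma 1, Case 1 (intra-sub-community edge deletion, endpoint merged later): Let m, α, γ, w, a, b be real numbers with 0 < α < m, γ > 0, w ≥ 0, α ≤ a and α ≤ b, and assume the pre-update removal gain is nonpositive, i.e. −w/(2·m) + γ·a·b/(4·m²) ≤ 0. If the post-deletion removal gain is positive, i.e. −(w − 2·α)/(2·(m − α)) + γ·(a − α)·(b − α)/(4·(m − α)²) > 0, then α > (2·m·w − γ·a·b)/(4·m + 2·w). -/
theorem lemma1_case1_intra_deletion_later_endpoint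
    (m α γ w a b : ℝ)
    (hα0 : 0 < α) (hαm : α < m) (hγ : 0 < γ) (hw : 0 ≤ w)
    (hαa : α ≤ a) (hαb : α ≤ b)
    (hpre : -w / (2 * m) + γ * a * b / (4 * m ^ 2) ≤ 0)
    (hpost : -(w - 2 * α) / (2 * (m - α)) + γ * (a - α) * (b - α) / (4 * (m - α) ^ 2) > 0) :
    α > (2 * m * w - γ * a * b) / (4 * m + 2 * w) := by
  have hd : 0 < m - α := sub_pos.mpr hαm
  have e : -(w - 2 * α) / (2 * (m - α)) + γ * (a - α) * (b - α) / (4 * (m - α) ^ 2)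
      = (γ * (a - α) * (b - α) - 2 * (m - α) * (w - 2 * α)) / (4 * (m - α) ^ 2) := by
    field_simp
    ring
  rw [e] at hpost
  have h1 : 0 < γ * (a - α) * (b - α) - 2 * (m - α) * (w - 2 * α) :=
    (div_pos_iff_of_pos_right (by positivity)).mp hpost
  have h2 : (a - α) * (b - α) ≤ a * b := by nlinarith
  have h3 := mul_le_mul_of_nonneg_left h2 hγ.le
  have hD : 0 < 4 * m + 2 * w := by linarith
  rw [gt_iff_lt, div_lt_iff₀ hD]
  nlinarith [sq_nonneg α]
end

section
/- Lemma 2, Cases 1–2 (cross-sub-community edge deletion, endpoints): Let m, α, γ, w, a, b be real numbers with 0 < α < m, γ > 0, w > 0 and b ≥ 0, and assume the pre-update removal gain is nonpositive, i.e. −w/(2·m) + γ·a·b/(4·m²) ≤ 0. If the post-deletion removal gain is positive, i.e. −w/(2·(m − α)) + γ·(a − α)·b/(4·(m − α)²) > 0, then α > m − γ·a·b/(2·w). -/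
theorem lemma2_cases12_cross_deletion_endpoints
    (m α γ w a b : ℝ)
    (hα0 : 0 < α) (hαm : α < m) (hγ : 0 < γ) (hw : 0 < w) (hb : 0 ≤ b)
    (hpre : -w / (2 * m) + γ * a * b / (4 * m ^ 2) ≤ 0)
    (hpost : -w / (2 * (m - α)) + γ * (a - α) * b / (4 * (m - α) ^ 2) > 0) :
    α > m - γ * a * b / (2 * w) := by
  have hd : 0 < m - α := sub_pos.mpr hαm
  have hne : m - α ≠ 0 := hd.ne'
  have e : -w / (2 * (m - α)) + γ * (a - α) * b / (4 * (m - α) ^ 2)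
      = (γ * (a - α) * b - 2 * w * (m - α)) / (4 * (m - α) ^ 2) := by
    field_simp
    ring
  rw [e] at hpost
  have h1 : 0 < γ * (a - α) * b - 2 * w * (m - α) :=
    (div_pos_iff_of_pos_right (by positivity)).mp hpost
  have h2 : 0 ≤ γ * α * b := by positivity
  have h3 : m - α < γ * a * b / (2 * w) := by
    rw [lt_div_iff₀ (by positivity)]
    nlinarith
  linarith
end

section
/- Lemma 3, Case 1 (intra-sub-community edge insertion, endpoint merged later): Let m, α, γ, w, a, b be real numbers with m > 0, α > 0, γ > 0 and w ≥ 0, and assume the pre-update removal gain is nonpositive, i.e. −w/(2·m) + γ·a·b/(4·m²) ≤ 0. If the post-insertion removal gain is positive, i.e. −(w + 2·α)/(2·(m + α)) + γ·(a + α)·(b + α)/(4·(m + α)²) > 0, then α > (4/γ)·m − (a + b). -/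
theorem lemma3_case1_intra_insertion_later_endpoint
    (m α γ w a b : ℝ)
    (hm : 0 < m) (hα : 0 < α) (hγ : 0 < γ) (hw : 0 ≤ w)
    (hpre : -w / (2 * m) + γ * a * b / (4 * m ^ 2) ≤ 0)
    (hpost : -(w + 2 * α) / (2 * (m + α)) + γ * (a + α) * (b + α) / (4 * (m + α) ^ 2) > 0) :
    α > (4 / γ) * m - (a + b) := by
  have hs : 0 < m + α := by linarith
  have e1 : -w / (2 * m) + γ * a * b / (4 * m ^ 2) = (γ * a * b - 2 * m * w) / (4 * m ^ 2) := by
    field_simp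
    ring
  have e2 : -(w + 2 * α) / (2 * (m + α)) + γ * (a + α) * (b + α) / (4 * (m + α) ^ 2)
      = (γ * (a + α) * (b + α) - 2 * (m + α) * (w + 2 * α)) / (4 * (m + α) ^ 2) := by
    field_simp
    ring
  rw [e1] at hpre
  rw [e2] at hpost
  have h1 : γ * a * b - 2 * m * w ≤ 0 := by
    by_contra! h
    have : 0 < (γ * a * b - 2 * m * w) / (4 * m ^ 2) := by positivity
    linarith
  have h2 : 0 < γ * (a + α) * (b + α) - 2 * (m + α) * (w + 2 * α) :=
    (div_pos_iff_of_pos_right (by positivity)).1 hpost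
  have h3 : 0 < α * (γ * (a + b + α) - 4 * m) := by
    nlinarith [mul_nonneg hw hα.le, mul_pos hα hα]
  have h4 : 0 < γ * (a + b + α) - 4 * m := (mul_pos_iff_of_pos_left hα).1 h3
  have h5 : 4 / γ * m < a + b + α := by
    rw [div_mul_eq_mul_div, div_lt_iff₀ hγ]
    linarith
  linarith
end

section
/- Lemma 3, Case 3 (edge insertion, other vertices of the affected sub-communities): Let m, α, γ, w, a, b, c be real numbers with m > 0, α > 0, γ > 0, w ≥ 0, a > 0 and 0 ≤ c ≤ 2·α, and assume the pre-update removal gain is nonpositive, i.e. −w/(2·m) + γ·a·b/(4·m²) ≤ 0. If the post-insertion removal gain is positive, i.e. −w/(2·(m + α)) + γ·a·(b + c)/(4·(m + α)²) > 0, then α > (w/(γ·a))·m − b/2. -/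
theorem lemma3_case3_insertion_other_vertices
    (m α γ w a b c : ℝ)
    (hm : 0 < m) (hα : 0 < α) (hγ : 0 < γ) (hw : 0 ≤ w)
    (ha : 0 < a) (hc0 : 0 ≤ c) (hcα : c ≤ 2 * α)
    (hpre : -w / (2 * m) + γ * a * b / (4 * m ^ 2) ≤ 0)
    (hpost : -w / (2 * (m + α)) + γ * a * (b + c) / (4 * (m + α) ^ 2) > 0) :
    α > (w / (γ * a)) * m - b / 2 := by
  have hM : 0 < m + α := by linarith
  have hg : 0 < γ * a := mul_pos hγ ha
  have e : -w / (2 * (m + α)) + γ * a * (b + c) / (4 * (m + α) ^ 2)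
      = (γ * a * (b + c) - 2 * w * (m + α)) / (4 * (m + α) ^ 2) := by
    field_simp
    ring
  rw [e] at hpost
  have h1 : 0 < γ * a * (b + c) - 2 * w * (m + α) :=
    (div_pos_iff_of_pos_right (by positivity)).1 hpost
  have h2 : γ * a * c ≤ γ * a * (2 * α) := mul_le_mul_of_nonneg_left hcα hg.le
  have h3 : 0 ≤ w * α := mul_nonneg hw hα.le
  have h4 : w / (γ * a) * m < α + b / 2 := by
    rw [div_mul_eq_mul_div, div_lt_iff₀ hg]
    linarith
  linarith
end

section
/- Lemma 3, Case 3 cross variant (cross-sub-community edge insertion, other vertices of the two affected sub-communities): Let m, α, γ, w, a, b be real numbers with m > 0, α > 0, γ > 0, w ≥ 0 and a > 0, and assume the pre-update removal gain is nonpositive, i.e. −w/(2·m) + γ·a·b/(4·m²) ≤ 0. If the post-insertion removal gain is positive, i.e. −w/(2·(m + α)) + γ·a·(b + α)/(4·(m + α)²) > 0, then α > (w/(γ·a))·m − b/2. -/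
theorem lemma3_case3_cross_insertion_other_vertices
    (m α γ w a b : ℝ)
    (hm : 0 < m) (hα : 0 < α) (hγ : 0 < γ) (hw : 0 ≤ w) (ha : 0 < a)
    (hpre : -w / (2 * m) + γ * a * b / (4 * m ^ 2) ≤ 0)
    (hpost : -w / (2 * (m + α)) + γ * a * (b + α) / (4 * (m + α) ^ 2) > 0) :
    α > (w / (γ * a)) * m - b / 2 := by
  have hg : 0 < γ * a := mul_pos hγ ha
  have hM : 0 < m + α := by linarith
  obtain ⟨r, hr⟩ : ∃ r, r = w / (γ * a) := ⟨_, rfl⟩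
  have hr0 : 0 ≤ r := hr ▸ div_nonneg hw hg.le
  have hwr : w = γ * a * r := by rw [hr]; field_simp
  rw [← hr]
  have e1 : -w / (2 * m) + γ * a * b / (4 * m ^ 2)
      = (γ * a / (4 * m ^ 2)) * (b - 2 * r * m) := by
    rw [hwr]; field_simp; ring
  have e2 : -w / (2 * (m + α)) + γ * a * (b + α) / (4 * (m + α) ^ 2)
      = (γ * a / (4 * (m + α) ^ 2)) * (b + α - 2 * r * (m + α)) := by
    rw [hwr]; field_simp; ring
  rw [e1] at hpre
  rw [e2] at hpost
  have h1 : b - 2 * r * m ≤ 0 := nonpos_of_mul_nonpos_right hpre (by positivity)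
  have h2 : 0 < b + α - 2 * r * (m + α) := pos_of_mul_pos_right hpost (by positivity)
  have h3 : 0 ≤ r * α := mul_nonneg hr0 hα.le
  linarith
end

section
/- Lemma 3, Case 4 (edge insertion, vertex outside the affected sub-communities is unaffected): Let m, α, γ, w, a, b be real numbers with m > 0, α > 0, γ > 0 and w > 0. If the pre-update removal gain is nonpositive, i.e. −w/(2·m) + γ·a·b/(4·m²) ≤ 0, then the post-insertion removal gain is strictly negative, i.e. −w/(2·(m + α)) + γ·a·b/(4·(m + α)²) < 0. -/
theorem lemma3_case4_insertion_outside_vertex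
    (m α γ w a b : ℝ)
    (hm : 0 < m) (hα : 0 < α) (hγ : 0 < γ) (hw : 0 < w)
    (hpre : -w / (2 * m) + γ * a * b / (4 * m ^ 2) ≤ 0) :
    -w / (2 * (m + α)) + γ * a * b / (4 * (m + α) ^ 2) < 0 := by
  have key : ∀ x : ℝ, 0 < x →
      -w / (2 * x) + γ * a * b / (4 * x ^ 2) = (γ * a * b - 2 * w * x) / (4 * x ^ 2) := by
    intro x hx
    have hx' : x ≠ 0 := hx.ne'
    field_simp
    ring
  have hs : 0 < m + α := by linarith
  rw [key m hm] at hpre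
  rw [key (m + α) hs]
  have h4 : 0 < 4 * m ^ 2 := by positivity
  have h1 : γ * a * b - 2 * w * m ≤ 0 := by
    by_contra h
    push Not at h
    exact absurd (div_pos h h4) (not_lt.mpr hpre)
  have hwa : 0 < w * α := mul_pos hw hα
  apply div_neg_of_neg_of_pos
  · nlinarith
  · positivity
end
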